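/- ∫₀¹ x·log Γ(x)·cos(2πx) dx = 1/8 − C/(2π²) − (1/(2π²))·∑_{n=2}^∞ (log n)/(n² − 1), where C = log(2π) + γ. -/

import Mathlib

open Real

/-!
By Kummer, the sine coefficients of `log Γ` on `(0, 1)` are `(log (2π) + γ + log k) / (2πk)`, and
the reflection formula reduces its cosine coefficients to those of `log sin (πx)`. Writing
`x = (x - 1/2) + 1/2`, the constant `1/2` contributes half the first cosine coefficient `1/4`,
while `(x - 1/2) cos (2πx)` is odd about `1/2`, so that Parseval's identity only involves sine
coefficients and produces `∑ (log (2π) + γ + log n) / (n² - 1)`.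

For Kummer's coefficients, replace `log Γ` by the approximations of the Bohr–Mollerup theorem,
which converge uniformly on `(0, 1]`. There the shifted logarithms `log (x + m)`, `m ≤ n`, unfold
to `∫ log t sin (2πkt) dt` over `(0, n + 1)`, which is the cosine integral `Cin` up to a factor.
Finally `Cin (2πK) - log (2πK) → γ`: replacing `1 / θ` by `cot (θ / 2) / 2` turns `Cin (2πK)` into
harmonic numbers, and the change is controlled by the Riemann–Lebesgue lemma.
-/

open Filter MeasureTheory Set Topology

/-! ### The cosine integral -/

lemma sin_nat_mul_mul_cot_half {θ : ℝ} (hθ : sin (θ / 2) ≠ 0) (n : ℕ) :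
    sin (n * θ) * cot (θ / 2) =
      ∑ j ∈ Finset.range n, (cos (j * θ) + cos ((j + 1 : ℕ) * θ)) := by
  induction n with
  | zero => simp
  | succ n ih =>
    have hstep : (sin ((n + 1 : ℕ) * θ) - sin (n * θ)) * cot (θ / 2) =
        cos (n * θ) + cos ((n + 1 : ℕ) * θ) := by
      rw [sin_sub_sin, add_comm (cos _), cos_add_cos,
        show ((n + 1 : ℕ) * θ - n * θ) / 2 = θ / 2 by push_cast; ring, cot_eq_cos_div_sin]
      field_simp
    rw [Finset.sum_range_succ, ← ih, ← hstep]
    ring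

lemma one_sub_cos_nat_mul_mul_cot_half {θ : ℝ} (hθ : sin (θ / 2) ≠ 0) (n : ℕ) :
    (1 - cos (n * θ)) * cot (θ / 2) =
      ∑ j ∈ Finset.range n, (sin (j * θ) + sin ((j + 1 : ℕ) * θ)) := by
  induction n with
  | zero => simp
  | succ n ih =>
    have hstep : (cos (n * θ) - cos ((n + 1 : ℕ) * θ)) * cot (θ / 2) =
        sin (n * θ) + sin ((n + 1 : ℕ) * θ) := by
      rw [← neg_sub, cos_sub_cos, add_comm (sin _), sin_add_sin,
        show ((n + 1 : ℕ) * θ - n * θ) / 2 = θ / 2 by push_cast; ring, cot_eq_cos_div_sin]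
      field_simp
    rw [Finset.sum_range_succ, ← ih, ← hstep]
    ring

lemma continuous_one_sub_cos_mul_div (c : ℝ) : Continuous fun x : ℝ => (1 - cos (c * x)) / x := by
  have h (x : ℝ) : (1 - cos (c * x)) / x = c * (sin (c * x / 2) * sinc (c * x / 2)) := by
    rcases eq_or_ne (c * x) 0 with hcx | hcx
    · simp [hcx]
    · have hcos : cos (c * x) = 1 - 2 * sin (c * x / 2) ^ 2 := by
        rw [← cos_two_mul_eq_one_sub, mul_div_cancel₀ _ two_ne_zero]
      obtain ⟨hc, hx⟩ := mul_ne_zero_iff.1 hcx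
      rw [sinc_of_ne_zero (by positivity), hcos]
      field_simp
      ring
  have := continuous_sinc
  simp only [h]
  fun_prop

/-- The entire cosine integral `Cin x = ∫₀ˣ (1 - cos t) / t dt`. -/
noncomputable def cin (x : ℝ) : ℝ := ∫ t in (0 : ℝ)..x, (1 - cos t) / t

lemma hasDerivAt_cin (x : ℝ) : HasDerivAt cin ((1 - cos x) / x) x :=
  (Continuous.integral_hasStrictDerivAt (by simpa using continuous_one_sub_cos_mul_div 1)
    0 x).hasDerivAt

lemma integral_one_sub_cos_mul_div (c T : ℝ) :
    ∫ x in (0 : ℝ)..T, (1 - cos (c * x)) / x = cin (c * T) := by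
  have h := intervalIntegral.mul_integral_comp_mul_left (a := 0) (b := T)
    (f := fun t => (1 - cos t) / t) c
  rw [mul_zero, ← cin, ← intervalIntegral.integral_const_mul] at h
  rw [← h]
  congr 1 with x
  rcases eq_or_ne c 0 with rfl | hc
  · simp
  · rw [← mul_div_assoc, mul_div_mul_left _ _ hc]

lemma integral_log_mul_sin {c : ℝ} (hc : c ≠ 0) (T : ℝ) :
    ∫ t in (0 : ℝ)..T, log t * sin (c * t) =
      ((1 - cos (c * T)) * log T - cin (c * T)) / c := by
  have hcont : Continuous fun t => (1 - cos (c * t)) * log t - cin (c * t) := by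
    have hcin : Continuous cin :=
      continuous_iff_continuousAt.2 fun x => (hasDerivAt_cin x).continuousAt
    have h (t : ℝ) : (1 - cos (c * t)) * log t = (1 - cos (c * t)) / t * (t * log t) := by
      rcases eq_or_ne t 0 with rfl | ht
      · simp
      · field_simp
    simp only [h]
    exact ((continuous_one_sub_cos_mul_div c).mul continuous_mul_log).sub
      (hcin.comp (continuous_const_mul c))
  have hderiv (t : ℝ) (ht : t ≠ 0) : HasDerivAt
      (fun t => (1 - cos (c * t)) * log t - cin (c * t)) (c * (log t * sin (c * t))) t := by
    have hlin : HasDerivAt (fun t => c * t) c t := hasDerivAt_const_mul c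
    convert! ((hlin.cos.const_sub 1).mul (hasDerivAt_log ht)).sub
      ((hasDerivAt_cin (c * t)).comp t hlin) using 1
    field_simp
    ring
  have hint : IntervalIntegrable (fun t => c * (log t * sin (c * t))) volume 0 T :=
    (intervalIntegral.intervalIntegrable_log'.mul_continuousOn (by fun_prop)).const_mul c
  have hftc := integral_eq_of_hasDerivAt_off_countable _ _ (countable_singleton 0)
    hcont.continuousOn (fun t ht => hderiv t ht.2) hint
  rw [intervalIntegral.integral_const_mul] at hftc
  rw [eq_div_iff hc, mul_comm, hftc]
  simp [cin]

/-- The regular part at `0` of the kernel `cot (θ / 2) / 2`, with the sign that makes it nonnegative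
on `(0, π)`. -/
noncomputable def cotRemainder (θ : ℝ) : ℝ := 1 / θ - cot (θ / 2) / 2

lemma hasDerivAt_neg_log_sinc_half {θ : ℝ} (hθ : sin (θ / 2) ≠ 0) :
    HasDerivAt (fun x => -log (sinc (x / 2))) (cotRemainder θ) θ := by
  have hθ0 : θ / 2 ≠ 0 := by
    intro h
    simp [h] at hθ
  have hhalf : HasDerivAt (fun x : ℝ => x / 2) (1 / 2) θ := (hasDerivAt_id θ).div_const 2
  have hlog : HasDerivAt (fun x => log (x / 2) - log (sin (x / 2))) (cotRemainder θ) θ := by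
    convert! (hhalf.log hθ0).sub (hhalf.sin.log hθ) using 1
    rw [cotRemainder, cot_eq_cos_div_sin]
    field_simp
  refine hlog.congr_of_eventuallyEq ?_
  have hev : ∀ᶠ x in 𝓝 θ, sin (x / 2) ≠ 0 :=
    hhalf.sin.continuousAt.eventually_ne hθ
  filter_upwards [hev, hhalf.continuousAt.eventually_ne hθ0] with x hs hx
  rw [sinc_of_ne_zero hx, log_div hs hx, neg_sub]

lemma sin_half_pos {θ : ℝ} (hθ : θ ∈ Ioc 0 π) : 0 < sin (θ / 2) :=
  sin_pos_of_pos_of_lt_pi (half_pos hθ.1) (by linarith [hθ.1, hθ.2])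

lemma continuousOn_neg_log_sinc_half :
    ContinuousOn (fun θ => -log (sinc (θ / 2))) (Icc 0 π) := by
  have := continuous_sinc
  refine (ContinuousOn.log (by fun_prop) fun θ hθ => ?_).neg
  rcases hθ.1.eq_or_lt with rfl | hθ0
  · simp
  · rw [sinc_of_ne_zero (by positivity)]
    exact (div_pos (sin_half_pos ⟨hθ0, hθ.2⟩) (half_pos hθ0)).ne'

lemma cotRemainder_nonneg {θ : ℝ} (hθ : θ ∈ Ioo 0 π) : 0 ≤ cotRemainder θ := by
  have htan : θ / 2 < tan (θ / 2) := lt_tan (half_pos hθ.1) (by linarith [hθ.2])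
  have hcot : cot (θ / 2) ≤ (θ / 2)⁻¹ := by
    rw [← tan_inv_eq_cot]
    exact inv_anti₀ (half_pos hθ.1) htan.le
  rw [cotRemainder, sub_nonneg]
  calc cot (θ / 2) / 2 ≤ (θ / 2)⁻¹ / 2 := by gcongr
    _ = 1 / θ := by rw [inv_div]; ring

lemma intervalIntegrable_cotRemainder : IntervalIntegrable cotRemainder volume 0 π := by
  refine intervalIntegral.intervalIntegrable_deriv_of_nonneg
    (g := fun θ => -log (sinc (θ / 2))) ?_ ?_ ?_
  · simpa only [uIcc_of_le pi_pos.le] using continuousOn_neg_log_sinc_half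
  all_goals rw [min_eq_left pi_pos.le, max_eq_right pi_pos.le]; intro θ hθ
  · exact hasDerivAt_neg_log_sinc_half (sin_half_pos (Ioo_subset_Ioc_self hθ)).ne'
  · exact cotRemainder_nonneg hθ

lemma integral_cotRemainder : ∫ θ in (0 : ℝ)..π, cotRemainder θ = log (π / 2) := by
  rw [intervalIntegral.integral_eq_sub_of_hasDerivAt_of_le pi_pos.le continuousOn_neg_log_sinc_half
    (fun θ hθ => hasDerivAt_neg_log_sinc_half (sin_half_pos (Ioo_subset_Ioc_self hθ)).ne')
    intervalIntegrable_cotRemainder, sinc_of_ne_zero (by positivity), sin_pi_div_two, one_div,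
    log_inv]
  simp

lemma tendsto_setIntegral_cos_mul {f : ℝ → ℝ} {s : Set ℝ} (hs : MeasurableSet s)
    (hf : IntegrableOn f s) :
    Tendsto (fun w : ℝ => ∫ x in s, cos (w * x) * f x) (cocompact ℝ) (𝓝 0) := by
  have hscale : Tendsto (fun w : ℝ => w / (2 * π)) (cocompact ℝ) (cocompact ℝ) :=
    (Homeomorph.mulRight₀ _ (inv_ne_zero two_pi_pos.ne')).isClosedEmbedding.tendsto_cocompact
  have hlim := (Complex.continuous_re.tendsto _).comp
    ((Real.tendsto_integral_exp_smul_cocompact (s.indicator fun x => (f x : ℂ))).comp hscale)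
  rw [Complex.zero_re] at hlim
  refine hlim.congr fun w => ?_
  have hint : Integrable fun x =>
      fourierChar (-(x * (w / (2 * π)))) • s.indicator (fun x => (f x : ℂ)) x := by
    have hfC : IntegrableOn (fun x => (f x : ℂ)) s := hf.ofReal
    simpa [mul_comm] using (Real.fourierIntegral_convergent_iff (w / (2 * π))).2
      (hfC.integrable_indicator hs)
  rw [Function.comp_apply, Function.comp_apply, ← RCLike.re_eq_complex_re, ← integral_re hint,
    ← integral_indicator hs]
  congr 1 with x
  by_cases hx : x ∈ s
  · rw [indicator_of_mem hx, indicator_of_mem hx, Circle.smul_def, Real.fourierChar_apply,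
      smul_eq_mul, RCLike.re_eq_complex_re, Complex.re_mul_ofReal, Complex.exp_ofReal_mul_I_re,
      ← cos_neg]
    congr 2
    field_simp
  · simp [hx]

lemma integral_sin_nat_mul (n : ℕ) : ∫ θ in (0 : ℝ)..π, sin (n * θ) = (1 - (-1) ^ n) / n := by
  rcases eq_or_ne n 0 with rfl | hn
  · simp
  · rw [intervalIntegral.integral_comp_mul_left (fun θ => sin θ) (Nat.cast_ne_zero.2 hn),
      integral_sin, mul_zero, cos_zero, cos_nat_mul_pi, smul_eq_mul, inv_mul_eq_div]

lemma integral_one_sub_cos_mul_cot_half (K : ℕ) :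
    ∫ θ in (0 : ℝ)..π, (1 - cos ((2 * K : ℕ) * θ)) * (cot (θ / 2) / 2) =
      2 * harmonic (2 * K) - harmonic K := by
  have hint (m : ℕ) : IntervalIntegrable (fun θ => sin (m * θ)) volume 0 π :=
    Continuous.intervalIntegrable (by fun_prop) 0 π
  calc ∫ θ in (0 : ℝ)..π, (1 - cos ((2 * K : ℕ) * θ)) * (cot (θ / 2) / 2)
      = ∫ θ in (0 : ℝ)..π,
          (∑ j ∈ Finset.range (2 * K), (sin (j * θ) + sin ((j + 1 : ℕ) * θ))) / 2 := by
        refine intervalIntegral.integral_congr_Ioo_of_le pi_pos.le fun θ hθ => ?_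
        rw [← one_sub_cos_nat_mul_mul_cot_half (sin_half_pos (Ioo_subset_Ioc_self hθ)).ne',
          mul_div_assoc]
    _ = (∑ j ∈ Finset.range (2 * K),
          ((1 - (-1 : ℝ) ^ j) / j + (1 - (-1) ^ (j + 1)) / (j + 1 : ℕ))) / 2 := by
        rw [intervalIntegral.integral_div, intervalIntegral.integral_finsetSum
          fun j _ => (hint j).add (hint (j + 1))]
        simp only [intervalIntegral.integral_add (hint _) (hint _), integral_sin_nat_mul]
    _ = 2 * harmonic (2 * K) - harmonic K := by
        induction K with
        | zero => simp
        | succ K ih =>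
          rw [mul_add_one, Finset.sum_range_succ, Finset.sum_range_succ, add_assoc, add_div, ih,
            harmonic_succ, harmonic_succ, harmonic_succ]
          simp only [pow_succ, pow_mul]
          push_cast
          field_simp
          ring

lemma tendsto_two_mul_harmonic_sub_harmonic_sub_log :
    Tendsto (fun K : ℕ => (2 * harmonic (2 * K) - harmonic K : ℝ) - log (4 * K)) atTop
      (𝓝 eulerMascheroniConstant) := by
  have hlim := ((tendsto_harmonic_sub_log.comp
    (tendsto_id.const_mul_atTop' zero_lt_two)).const_mul 2).sub tendsto_harmonic_sub_log
  rw [two_mul, add_sub_cancel_right] at hlim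
  refine hlim.congr' ?_
  filter_upwards [eventually_ne_atTop 0] with K hK
  have hK' : (K : ℝ) ≠ 0 := Nat.cast_ne_zero.2 hK
  simp only [Function.comp_apply, id_eq]
  push_cast
  rw [log_mul two_ne_zero hK', log_mul four_ne_zero hK', show (4 : ℝ) = 2 ^ 2 by norm_num, log_pow]
  push_cast
  ring

lemma cin_two_pi_mul (K : ℕ) :
    cin (2 * π * K) = 2 * harmonic (2 * K) - harmonic K + log (π / 2) -
      ∫ θ in (0 : ℝ)..π, cos ((2 * K : ℕ) * θ) * cotRemainder θ := by
  have hcos : IntervalIntegrable (fun θ => cos ((2 * K : ℕ) * θ) * cotRemainder θ) volume 0 π :=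
    intervalIntegrable_cotRemainder.continuousOn_mul (by fun_prop)
  have hrem : IntervalIntegrable (fun θ => (1 - cos ((2 * K : ℕ) * θ)) * cotRemainder θ)
      volume 0 π :=
    intervalIntegrable_cotRemainder.continuousOn_mul (by fun_prop)
  have hker : cin (2 * π * K) - ∫ θ in (0 : ℝ)..π, (1 - cos ((2 * K : ℕ) * θ)) * cotRemainder θ =
      2 * harmonic (2 * K) - harmonic K := by
    rw [show 2 * π * K = (2 * K : ℕ) * π by push_cast; ring, ← integral_one_sub_cos_mul_div,
      ← intervalIntegral.integral_sub
        ((continuous_one_sub_cos_mul_div _).intervalIntegrable 0 π) hrem,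
      ← integral_one_sub_cos_mul_cot_half]
    congr 1 with θ
    rw [cotRemainder]
    ring
  have hsplit : ∫ θ in (0 : ℝ)..π, (1 - cos ((2 * K : ℕ) * θ)) * cotRemainder θ =
      log (π / 2) - ∫ θ in (0 : ℝ)..π, cos ((2 * K : ℕ) * θ) * cotRemainder θ := by
    rw [← integral_cotRemainder,
      ← intervalIntegral.integral_sub intervalIntegrable_cotRemainder hcos]
    simp only [sub_mul, one_mul]
  linarith

lemma tendsto_cin_two_pi_mul_sub_log :
    Tendsto (fun K : ℕ => cin (2 * π * K) - log (2 * π * K)) atTop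
      (𝓝 eulerMascheroniConstant) := by
  have hfreq : Tendsto (fun K : ℕ => ((2 * K : ℕ) : ℝ)) atTop (cocompact ℝ) :=
    (tendsto_natCast_atTop_atTop.comp
      (tendsto_id.const_mul_atTop' zero_lt_two)).mono_right atTop_le_cocompact
  have hosc := (tendsto_setIntegral_cos_mul measurableSet_Ioc
    ((intervalIntegrable_iff_integrableOn_Ioc_of_le pi_pos.le).1
      intervalIntegrable_cotRemainder)).comp hfreq
  have hlim := tendsto_two_mul_harmonic_sub_harmonic_sub_log.sub hosc
  rw [sub_zero] at hlim
  refine hlim.congr' ?_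
  filter_upwards [eventually_ne_atTop 0] with K hK
  have hlog : log (2 * π * K) = log (4 * K) + log (π / 2) := by
    rw [← log_mul (by positivity) (by positivity)]
    ring_nf
  rw [cin_two_pi_mul, hlog, Function.comp_apply, intervalIntegral.integral_of_le pi_pos.le]
  ring

/-! ### Fourier coefficients on the unit interval -/

/-- The cosine coefficient `∫₀¹ f(x) cos(2πnx) dx` of a function on the unit interval. Together with
`sinCoeff` it splits the complex Fourier coefficient, so there is no factor `2`. -/
noncomputable def cosCoeff (f : ℝ → ℝ) (n : ℤ) : ℝ := ∫ x in (0 : ℝ)..1, f x * cos (2 * π * n * x)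

/-- The sine coefficient `∫₀¹ f(x) sin(2πnx) dx` of a function on the unit interval. -/
noncomputable def sinCoeff (f : ℝ → ℝ) (n : ℤ) : ℝ := ∫ x in (0 : ℝ)..1, f x * sin (2 * π * n * x)

section

variable {f g : ℝ → ℝ}

lemma intervalIntegrable_mul_cos (hf : IntervalIntegrable f volume 0 1) (n : ℤ) :
    IntervalIntegrable (fun x => f x * cos (2 * π * n * x)) volume 0 1 :=
  hf.mul_continuousOn (by fun_prop)

lemma intervalIntegrable_mul_sin (hf : IntervalIntegrable f volume 0 1) (n : ℤ) :
    IntervalIntegrable (fun x => f x * sin (2 * π * n * x)) volume 0 1 :=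
  hf.mul_continuousOn (by fun_prop)

lemma cosCoeff_add (hf : IntervalIntegrable f volume 0 1) (hg : IntervalIntegrable g volume 0 1)
    (n : ℤ) : cosCoeff (fun x => f x + g x) n = cosCoeff f n + cosCoeff g n := by
  simp only [cosCoeff, add_mul]
  exact intervalIntegral.integral_add (intervalIntegrable_mul_cos hf n)
    (intervalIntegrable_mul_cos hg n)

lemma sinCoeff_add (hf : IntervalIntegrable f volume 0 1) (hg : IntervalIntegrable g volume 0 1)
    (n : ℤ) : sinCoeff (fun x => f x + g x) n = sinCoeff f n + sinCoeff g n := by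
  simp only [sinCoeff, add_mul]
  exact intervalIntegral.integral_add (intervalIntegrable_mul_sin hf n)
    (intervalIntegrable_mul_sin hg n)

lemma sinCoeff_const_mul (c : ℝ) (f : ℝ → ℝ) (n : ℤ) :
    sinCoeff (fun x => c * f x) n = c * sinCoeff f n := by
  simp only [sinCoeff, mul_assoc, intervalIntegral.integral_const_mul]

lemma cosCoeff_comp_one_sub (f : ℝ → ℝ) (n : ℤ) :
    cosCoeff (fun x => f (1 - x)) n = cosCoeff f n := by
  have h := intervalIntegral.integral_comp_sub_left (a := 0) (b := 1)
    (fun x => f x * cos (2 * π * n * x)) 1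
  rw [sub_self, sub_zero] at h
  rw [cosCoeff, cosCoeff, ← h]
  congr 1 with x
  rw [← cos_int_mul_two_pi_sub _ n]
  ring_nf

lemma sinCoeff_comp_one_sub (f : ℝ → ℝ) (n : ℤ) :
    sinCoeff (fun x => f (1 - x)) n = -sinCoeff f n := by
  have h := intervalIntegral.integral_comp_sub_left (a := 0) (b := 1)
    (fun x => f x * sin (2 * π * n * x)) 1
  rw [sub_self, sub_zero] at h
  rw [sinCoeff, sinCoeff, ← h, ← intervalIntegral.integral_neg]
  congr 1 with x
  rw [show 2 * π * n * (1 - x) = n * (2 * π) - 2 * π * n * x by ring, sin_int_mul_two_pi_sub]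
  ring

lemma sinCoeff_mul_cos (hf : IntervalIntegrable f volume 0 1) (m n : ℤ) :
    sinCoeff (fun x => f x * cos (2 * π * m * x)) n =
      (sinCoeff f (n + m) + sinCoeff f (n - m)) / 2 := by
  rw [sinCoeff, sinCoeff, sinCoeff, ← intervalIntegral.integral_add
    (intervalIntegrable_mul_sin hf _) (intervalIntegrable_mul_sin hf _),
    ← intervalIntegral.integral_div]
  congr 1 with x
  push_cast
  rw [mul_add (2 * π), mul_sub (2 * π), add_mul, sub_mul, sin_add, sin_sub]
  ring

lemma abs_sinCoeff_sub_le {C : ℝ} (hf : IntervalIntegrable f volume 0 1)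
    (hg : IntervalIntegrable g volume 0 1) (h : ∀ x ∈ Ioc (0 : ℝ) 1, |f x - g x| ≤ C) (n : ℤ) :
    |sinCoeff f n - sinCoeff g n| ≤ C := by
  rw [sinCoeff, sinCoeff, ← intervalIntegral.integral_sub (intervalIntegrable_mul_sin hf n)
    (intervalIntegrable_mul_sin hg n)]
  have hbound := intervalIntegral.norm_integral_le_of_norm_le_const (a := 0) (b := 1)
    (f := fun x => f x * sin (2 * π * n * x) - g x * sin (2 * π * n * x)) (C := C) fun x hx => ?_
  · simpa using hbound
  · rw [uIoc_of_le zero_le_one] at hx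
    rw [← sub_mul, norm_mul]
    exact (mul_le_of_le_one_right (norm_nonneg _) (abs_sin_le_one _)).trans (h x hx)

lemma fourierCoeffOn_ofReal (hf : IntervalIntegrable f volume 0 1) (n : ℤ) :
    fourierCoeffOn (zero_lt_one (α := ℝ)) (fun x => (f x : ℂ)) n =
      cosCoeff f n - sinCoeff f n * Complex.I := by
  have hofReal {h : ℝ → ℝ} (hh : IntervalIntegrable h volume 0 1) :
      IntervalIntegrable (fun x => (h x : ℂ)) volume 0 1 := ⟨hh.1.ofReal, hh.2.ofReal⟩
  rw [fourierCoeffOn_eq_integral, cosCoeff, sinCoeff, ← intervalIntegral.integral_ofReal,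
    ← intervalIntegral.integral_ofReal, ← intervalIntegral.integral_mul_const,
    ← intervalIntegral.integral_sub (hofReal (intervalIntegrable_mul_cos hf n))
      ((hofReal (intervalIntegrable_mul_sin hf n)).mul_const _), sub_zero, div_one, one_smul]
  congr 1 with x
  rw [fourier_coe_apply, smul_eq_mul,
    show 2 * (π : ℂ) * Complex.I * ((-n : ℤ) : ℂ) * x / ((1 : ℝ) : ℂ) =
      ((-(2 * π * n * x) : ℝ) : ℂ) * Complex.I by push_cast; ring,
    Complex.exp_mul_I, ← Complex.ofReal_cos, ← Complex.ofReal_sin, cos_neg, sin_neg]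
  push_cast
  ring

end

lemma sinCoeff_affine (a b : ℝ) (n : ℤ) : sinCoeff (fun x => a * x + b) n = -a / (2 * π * n) := by
  have hconst : sinCoeff (fun _ => b + a / 2) n = 0 := by
    have h := sinCoeff_comp_one_sub (fun _ => b + a / 2) n
    linarith
  have hbernoulli : sinCoeff (bernoulliFun 1) n = -1 / (2 * π * n) := by
    have h := (fourierCoeffOn_ofReal (intervalIntegrable_bernoulliFun 1 0 1) n).symm.trans
      (bernoulliFourierCoeff_eq one_ne_zero n)
    have hcoeff : -((1 : ℕ).factorial : ℂ) / (2 * π * Complex.I * n) ^ 1 =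
        ((1 / (2 * π * n) : ℝ) : ℂ) * Complex.I := by
      simp only [Nat.factorial_one, Nat.cast_one, pow_one, div_eq_mul_inv, mul_inv, Complex.inv_I]
      push_cast
      ring
    have him := congrArg Complex.im (h.trans hcoeff)
    rw [Complex.im_ofReal_mul, Complex.sub_im, Complex.ofReal_im, Complex.im_ofReal_mul,
      Complex.I_im] at him
    linear_combination -him
  have hsplit : (fun x => a * x + b) = fun x => a * bernoulliFun 1 x + (b + a / 2) := by
    ext x
    rw [bernoulliFun_one]
    ring
  rw [hsplit, sinCoeff_add ((intervalIntegrable_bernoulliFun 1 0 1).const_mul a)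
    intervalIntegrable_const, sinCoeff_const_mul, hbernoulli, hconst]
  ring

lemma hasSum_star_fourierCoeffOn_mul {a b : ℝ} (hab : a < b) {f g : ℝ → ℂ}
    (hf : MemLp f 2 (volume.restrict (Ioc a b))) (hg : MemLp g 2 (volume.restrict (Ioc a b))) :
    HasSum (fun n => star (fourierCoeffOn hab f n) * fourierCoeffOn hab g n)
      ((b - a)⁻¹ • ∫ x in a..b, star (f x) * g x) := by
  have := Fact.mk (sub_pos.2 hab)
  rw [← add_sub_cancel a b] at hf hg
  have hF := hf.memLp_liftIoc.haarAddCircle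
  have hG := hg.memLp_liftIoc.haarAddCircle
  have hcoeff {h : ℝ → ℂ} (hH : MemLp (AddCircle.liftIoc (b - a) a h) 2 AddCircle.haarAddCircle)
      (n : ℤ) : fourierBasis.repr hH.toLp n = fourierCoeffOn hab h n := by
    rw [fourierBasis_repr, fourierCoeff_congr_ae hH.coeFn_toLp, fourierCoeff_liftIoc_eq]
    simp only [add_sub_cancel]
  convert! fourierBasis.hasSum_inner_mul_inner hF.toLp hG.toLp using 1
  · ext n
    rw [← inner_conj_symm, ← HilbertBasis.repr_apply_apply, ← HilbertBasis.repr_apply_apply,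
      hcoeff, hcoeff]
    rfl
  · rw [L2.inner_def]
    nth_rw 2 [← add_sub_cancel a b]
    rw [← AddCircle.integral_liftIoc_eq_intervalIntegral, ← AddCircle.integral_haarAddCircle]
    refine integral_congr_ae ?_
    filter_upwards [hF.coeFn_toLp, hG.coeFn_toLp] with x hx hy
    rw [hx, hy, RCLike.inner_apply, mul_comm]
    rfl

lemma hasSum_cosCoeff_mul_add_sinCoeff_mul {f g : ℝ → ℝ}
    (hf : MemLp f 2 (volume.restrict (Ioc 0 1))) (hg : MemLp g 2 (volume.restrict (Ioc 0 1))) :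
    HasSum (fun n => cosCoeff f n * cosCoeff g n + sinCoeff f n * sinCoeff g n)
      (∫ x in (0 : ℝ)..1, f x * g x) := by
  have hint {h : ℝ → ℝ} (hh : MemLp h 2 (volume.restrict (Ioc 0 1))) :
      IntervalIntegrable h volume 0 1 :=
    (intervalIntegrable_iff_integrableOn_Ioc_of_le zero_le_one).2 (hh.integrable one_le_two)
  have hfC : MemLp (fun x => (f x : ℂ)) 2 (volume.restrict (Ioc 0 1)) := hf.ofReal
  have hgC : MemLp (fun x => (g x : ℂ)) 2 (volume.restrict (Ioc 0 1)) := hg.ofReal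
  convert! Complex.hasSum_re (hasSum_star_fourierCoeffOn_mul zero_lt_one hfC hgC) using 1
  · ext n
    rw [fourierCoeffOn_ofReal (hint hf), fourierCoeffOn_ofReal (hint hg)]
    simp
  · have hprod : ∫ x in (0 : ℝ)..1, star (f x : ℂ) * (g x : ℂ) =
        ((∫ x in (0 : ℝ)..1, f x * g x : ℝ) : ℂ) := by
      rw [← intervalIntegral.integral_ofReal]
      congr 1 with x
      simp
    rw [hprod, sub_zero, inv_one, one_smul, Complex.ofReal_re]

lemma hasSum_sinCoeff_mul_sinCoeff_of_odd {f g : ℝ → ℝ}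
    (hf : MemLp f 2 (volume.restrict (Ioc 0 1))) (hg : MemLp g 2 (volume.restrict (Ioc 0 1)))
    (hodd : ∀ x, g (1 - x) = -g x) :
    HasSum (fun n : ℕ => 2 * (sinCoeff f (n + 1) * sinCoeff g (n + 1)))
      (∫ x in (0 : ℝ)..1, f x * g x) := by
  have hcos (n : ℤ) : cosCoeff g n = 0 := by
    have h := cosCoeff_comp_one_sub g n
    simp only [hodd, cosCoeff, neg_mul, intervalIntegral.integral_neg] at h ⊢
    linarith
  have hneg (h : ℝ → ℝ) (n : ℤ) : sinCoeff h (-n) = -sinCoeff h n := by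
    simp [sinCoeff]
  have hzero (h : ℝ → ℝ) : sinCoeff h 0 = 0 := by simp [sinCoeff]
  have hsum := (hasSum_cosCoeff_mul_add_sinCoeff_mul hf hg).nat_add_neg
  rw [← hasSum_nat_add_iff' 1] at hsum
  simp only [Nat.cast_succ, hcos, hneg, mul_zero, zero_add, neg_mul_neg, ← two_mul] at hsum
  simpa [hcos, hzero] using hsum

/-! ### Fourier coefficients of `log Γ` -/

lemma memLp_log {p : ENNReal} (hp : p ≠ ⊤) : MemLp log p (volume.restrict (Ioc 0 1)) := by
  rcases eq_or_ne p 0 with rfl | hp0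
  · exact memLp_zero_iff_aestronglyMeasurable.2 measurable_log.aestronglyMeasurable
  set q := p.toReal
  have hq : 0 < q := ENNReal.toReal_pos hp0 hp
  have hdom : IntegrableOn (fun x : ℝ => (2 * q) ^ q * x ^ (-(1 / 2) : ℝ)) (Ioc 0 1) :=
    ((intervalIntegrable_iff_integrableOn_Ioc_of_le zero_le_one).1
      (intervalIntegral.intervalIntegrable_rpow' (by norm_num))).const_mul _
  rw [← integrable_norm_rpow_iff measurable_log.aestronglyMeasurable hp0 hp]
  refine hdom.mono' (measurable_log.norm.pow_const q).aestronglyMeasurable ?_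
  filter_upwards [ae_restrict_mem measurableSet_Ioc] with x ⟨hx0, hx1⟩
  have hbound : |log x| * x ^ (1 / (2 * q)) ≤ 2 * q := by
    have h := abs_log_mul_self_rpow_lt x (1 / (2 * q)) hx0 hx1 (by positivity)
    rw [abs_mul, abs_of_nonneg (rpow_nonneg hx0.le _), one_div_one_div] at h
    exact h.le
  have hpow : |log x| ^ q * x ^ (1 / 2 : ℝ) ≤ (2 * q) ^ q := by
    have h := rpow_le_rpow (by positivity) hbound hq.le
    rwa [mul_rpow (abs_nonneg _) (by positivity), ← rpow_mul hx0.le,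
      show 1 / (2 * q) * q = 1 / 2 by field_simp] at h
  rw [norm_of_nonneg (by positivity), norm_eq_abs, rpow_neg hx0.le, ← div_eq_mul_inv,
    le_div_iff₀ (by positivity)]
  exact hpow

lemma log_Gamma_add_one {x : ℝ} (hx : 0 < x) :
    log (Gamma (x + 1)) = log (Gamma x) + log x := by
  rw [Gamma_add_one hx.ne', log_mul hx.ne' (Gamma_pos_of_pos hx).ne', add_comm]

lemma memLp_log_Gamma {p : ENNReal} (hp : p ≠ ⊤) :
    MemLp (fun x => log (Gamma x)) p (volume.restrict (Ioc 0 1)) := by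
  have hcont : ContinuousOn (fun x => log (Gamma (x + 1))) (Icc 0 1) :=
    (convexOn_log_Gamma.continuousOn isOpen_Ioi).comp (by fun_prop) fun x hx =>
      add_pos_of_nonneg_of_pos hx.1 one_pos
  obtain ⟨C, hC⟩ := isCompact_Icc.exists_bound_of_continuousOn hcont
  have hbdd : MemLp (fun x => log (Gamma (x + 1))) p (volume.restrict (Ioc 0 1)) := by
    refine MemLp.of_bound ((hcont.mono Ioc_subset_Icc_self).aestronglyMeasurable
      measurableSet_Ioc) C ?_
    filter_upwards [ae_restrict_mem measurableSet_Ioc] with x hx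
    exact hC x (Ioc_subset_Icc_self hx)
  refine (hbdd.sub (memLp_log hp)).ae_eq ?_
  filter_upwards [ae_restrict_mem measurableSet_Ioc] with x hx
  rw [Pi.sub_apply, log_Gamma_add_one hx.1, add_sub_cancel_right]

lemma intervalIntegrable_log_Gamma : IntervalIntegrable (fun x => log (Gamma x)) volume 0 1 :=
  (intervalIntegrable_iff_integrableOn_Ioc_of_le zero_le_one).2
    ((memLp_log_Gamma ENNReal.one_ne_top).integrable le_rfl)

lemma abs_log_Gamma_sub_logGammaSeq_le {x : ℝ} (hx : x ∈ Ioc 0 1) {n : ℕ} (hn : n ≠ 0) :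
    |log (Gamma x) - BohrMollerup.logGammaSeq x n| ≤ log (n + 1) - log n := by
  have hfeq {y : ℝ} (hy : 0 < y) : (log ∘ Gamma) (y + 1) = (log ∘ Gamma) y + log y :=
    log_Gamma_add_one hy
  have hlower := BohrMollerup.ge_logGammaSeq convexOn_log_Gamma hfeq hx.1 hn
  have hupper := BohrMollerup.le_logGammaSeq convexOn_log_Gamma hfeq hx.1 hx.2 n
  simp only [Function.comp_apply, Gamma_one, log_one, zero_add] at hlower hupper
  have hlog : 0 ≤ log (n + 1) - log n :=
    sub_nonneg.2 (log_le_log (by positivity) (by linarith))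
  rw [abs_of_nonneg (sub_nonneg.2 hlower)]
  calc log (Gamma x) - BohrMollerup.logGammaSeq x n ≤ x * (log (n + 1) - log n) := by linarith
    _ ≤ log (n + 1) - log n := mul_le_of_le_one_left hlog hx.2

lemma intervalIntegrable_log_add (m a b : ℝ) :
    IntervalIntegrable (fun x => log (x + m)) volume a b := by
  simpa using (intervalIntegral.intervalIntegrable_log' (a := a + m) (b := b + m)).comp_add_right m

lemma intervalIntegrable_sum_log_add (n : ℕ) (a b : ℝ) :
    IntervalIntegrable (fun x => ∑ m ∈ Finset.range n, log (x + m)) volume a b := by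
  simpa only [Finset.sum_fn] using
    IntervalIntegrable.sum (Finset.range n) fun m _ => intervalIntegrable_log_add m a b

lemma sum_integral_comp_add_mul_of_periodic {f g : ℝ → ℝ} (hg : Function.Periodic g 1) {N : ℕ}
    (hint : ∀ m < N, IntervalIntegrable (fun x => f x * g x) volume m (m + 1 : ℕ)) :
    ∑ m ∈ Finset.range N, ∫ x in (0 : ℝ)..1, f (x + m) * g x =
      ∫ x in (0 : ℝ)..N, f x * g x := by
  rw [← Nat.cast_zero, ← intervalIntegral.sum_integral_adjacent_intervals hint]
  refine Finset.sum_congr rfl fun m _ => ?_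
  have hshift := intervalIntegral.integral_comp_add_right (a := 0) (b := 1)
    (fun x => f x * g x) m
  rw [zero_add, add_comm (1 : ℝ)] at hshift
  rw [Nat.cast_zero, Nat.cast_succ, ← hshift]
  congr 1 with x
  rw [← hg.nat_mul m x, mul_one]

lemma sinCoeff_sum_log_add {k : ℕ} (hk : k ≠ 0) (N : ℕ) :
    sinCoeff (fun x => ∑ m ∈ Finset.range N, log (x + m)) k =
      -cin (2 * π * (k * N : ℕ)) / (2 * π * k) := by
  have hper : Function.Periodic (fun x => sin (2 * π * (k : ℤ) * x)) 1 := fun x => by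
    dsimp only
    rw [mul_add, mul_one, Int.cast_natCast, mul_comm (2 * π) (k : ℝ), sin_add_nat_mul_two_pi]
  have hmul : 2 * π * k * N = 2 * π * (k * N : ℕ) := by
    push_cast
    ring
  simp only [sinCoeff, Finset.sum_mul]
  rw [intervalIntegral.integral_finsetSum fun (m : ℕ) _ =>
      intervalIntegrable_mul_sin (intervalIntegrable_log_add m 0 1) k,
    sum_integral_comp_add_mul_of_periodic hper fun m _ =>
      intervalIntegral.intervalIntegrable_log'.mul_continuousOn (by fun_prop),
    Int.cast_natCast, integral_log_mul_sin (by positivity), hmul,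
    mul_comm (2 * π) ((k * N : ℕ) : ℝ), cos_nat_mul_two_pi, sub_self, zero_mul, zero_sub]

lemma logGammaSeq_eq_affine_add (n : ℕ) :
    (fun x => BohrMollerup.logGammaSeq x n) = fun x =>
      (log n * x + log n.factorial) + -1 * ∑ m ∈ Finset.range (n + 1), log (x + m) := by
  ext x
  rw [BohrMollerup.logGammaSeq]
  ring

lemma intervalIntegrable_logGammaSeq (n : ℕ) (a b : ℝ) :
    IntervalIntegrable (fun x => BohrMollerup.logGammaSeq x n) volume a b := by
  rw [logGammaSeq_eq_affine_add]
  exact (Continuous.intervalIntegrable (by fun_prop) a b).add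
    ((intervalIntegrable_sum_log_add (n + 1) a b).const_mul (-1))

lemma sinCoeff_logGammaSeq {k : ℕ} (hk : k ≠ 0) (n : ℕ) :
    sinCoeff (fun x => BohrMollerup.logGammaSeq x n) k =
      (cin (2 * π * (k * (n + 1) : ℕ)) - log n) / (2 * π * k) := by
  rw [logGammaSeq_eq_affine_add, sinCoeff_add (Continuous.intervalIntegrable (by fun_prop) 0 1)
    ((intervalIntegrable_sum_log_add (n + 1) 0 1).const_mul (-1)), sinCoeff_affine,
    sinCoeff_const_mul, sinCoeff_sum_log_add hk, Int.cast_natCast]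
  ring

lemma sinCoeff_log_Gamma {k : ℕ} (hk : k ≠ 0) :
    sinCoeff (fun x => log (Gamma x)) k =
      (log (2 * π) + eulerMascheroniConstant + log k) / (2 * π * k) := by
  have hseq : Tendsto (fun n : ℕ => sinCoeff (fun x => BohrMollerup.logGammaSeq x n) k) atTop
      (𝓝 (sinCoeff (fun x => log (Gamma x)) k)) := by
    rw [tendsto_iff_norm_sub_tendsto_zero]
    refine squeeze_zero' (.of_forall fun _ => norm_nonneg _) ?_ tendsto_log_nat_add_one_sub_log
    filter_upwards [eventually_ne_atTop 0] with n hn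
    rw [norm_sub_rev]
    exact abs_sinCoeff_sub_le intervalIntegrable_log_Gamma (intervalIntegrable_logGammaSeq n 0 1)
      (fun x hx => abs_log_Gamma_sub_logGammaSeq_le hx hn) k
  have hfreq : Tendsto (fun n : ℕ => k * (n + 1)) atTop atTop :=
    (tendsto_add_atTop_nat 1).const_mul_atTop' (Nat.pos_of_ne_zero hk)
  have hlim := (((tendsto_cin_two_pi_mul_sub_log.comp hfreq).add
    tendsto_log_nat_add_one_sub_log).add_const (log (2 * π) + log k)).div_const (2 * π * k)
  rw [add_zero, add_left_comm, ← add_assoc] at hlim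
  refine tendsto_nhds_unique hseq (hlim.congr fun n => ?_)
  have hlog : log (2 * π * (k * (n + 1) : ℕ)) = log (2 * π) + log k + log (n + 1) := by
    push_cast
    rw [log_mul (by positivity) (by positivity),
      log_mul (Nat.cast_ne_zero.2 hk) (by positivity), add_assoc]
  rw [sinCoeff_logGammaSeq hk, Function.comp_apply, hlog]
  ring

lemma intervalIntegrable_log_sin_pi_mul :
    IntervalIntegrable (fun x => log (sin (π * x))) volume 0 1 := by
  simpa [pi_ne_zero] using (intervalIntegrable_log_sin (a := 0) (b := π)).comp_mul_left (c := π)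

lemma sin_pi_mul_pos {x : ℝ} (hx : x ∈ Ioo 0 1) : 0 < sin (π * x) :=
  sin_pos_of_pos_of_lt_pi (mul_pos pi_pos hx.1) (mul_lt_of_lt_one_right pi_pos hx.2)

lemma cosCoeff_const (c : ℝ) (n : ℤ) : cosCoeff (fun _ => c) n = if n = 0 then c else 0 := by
  rw [cosCoeff, intervalIntegral.integral_const_mul]
  split_ifs with hn
  · simp [hn]
  · have hn' : 2 * π * n ≠ 0 := mul_ne_zero two_pi_pos.ne' (Int.cast_ne_zero.2 hn)
    rw [intervalIntegral.integral_comp_mul_left (fun x => cos x) hn', integral_cos, mul_one,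
      mul_comm (2 * π), sin_periodic.int_mul_eq]
    simp

lemma continuous_sin_nat_mul_mul_log_sin (n : ℕ) :
    Continuous fun θ => sin (n * θ) * log (sin θ) := by
  have h (θ : ℝ) : sin (n * θ) * log (sin θ) =
      (Polynomial.Chebyshev.U ℝ (n - 1)).eval (cos θ) * (sin θ * log (sin θ)) := by
    rw [← mul_assoc, Polynomial.Chebyshev.U_real_cos]
    push_cast
    rw [sub_add_cancel]
  simp only [h]
  exact ((Polynomial.continuous _).comp continuous_cos).mul
    (continuous_mul_log.comp continuous_sin)

lemma hasDerivAt_sin_two_pi_mul_mul_log_sin {x : ℝ} (hx : x ∈ Ioo 0 1) (n : ℕ) :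
    HasDerivAt (fun x => sin (2 * π * n * x) * log (sin (π * x)))
      (2 * π * n * (log (sin (π * x)) * cos (2 * π * n * x)) +
        π * ∑ j ∈ Finset.range n, (cos (2 * π * j * x) + cos (2 * π * (j + 1 : ℕ) * x))) x := by
  have hs := (sin_pi_mul_pos hx).ne'
  have hcot := sin_nat_mul_mul_cot_half (θ := 2 * (π * x)) (by simpa using hs) n
  rw [mul_div_cancel_left₀ _ two_ne_zero, cot_eq_cos_div_sin] at hcot
  have hassoc (j : ℕ) : 2 * π * j * x = j * (2 * (π * x)) := by ring
  convert! (hasDerivAt_const_mul (2 * π * n)).sin.mul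
    ((hasDerivAt_const_mul π).sin.log hs) using 1
  simp only [hassoc, ← hcot]
  ring

lemma integral_sum_cos_add_cos {n : ℕ} (hn : n ≠ 0) :
    ∫ x in (0 : ℝ)..1, ∑ j ∈ Finset.range n,
      (cos (2 * π * j * x) + cos (2 * π * (j + 1 : ℕ) * x)) = 1 := by
  have hint (j : ℕ) : IntervalIntegrable (fun x => cos (2 * π * j * x)) volume 0 1 :=
    Continuous.intervalIntegrable (by fun_prop) 0 1
  have hcos (j : ℕ) : ∫ x in (0 : ℝ)..1, cos (2 * π * j * x) = if j = 0 then 1 else 0 := by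
    simpa [cosCoeff] using cosCoeff_const 1 j
  rw [intervalIntegral.integral_finsetSum fun j _ => (hint j).add (hint (j + 1))]
  simp only [intervalIntegral.integral_add (hint _) (hint _), hcos, Nat.succ_ne_zero, if_false,
    add_zero]
  rw [Finset.sum_ite_eq' (Finset.range n) 0, if_pos (Finset.mem_range.2 (Nat.pos_of_ne_zero hn))]

lemma cosCoeff_log_sin_pi_mul {n : ℕ} (hn : n ≠ 0) :
    cosCoeff (fun x => log (sin (π * x))) n = -1 / (2 * n) := by
  have hcont : Continuous fun x => sin (2 * π * n * x) * log (sin (π * x)) := by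
    refine ((continuous_sin_nat_mul_mul_log_sin (2 * n)).comp (continuous_const_mul π)).congr
      fun x => ?_
    rw [Function.comp_apply, Nat.cast_mul, Nat.cast_two]
    ring_nf
  have hlog : IntervalIntegrable (fun x => 2 * π * n * (log (sin (π * x)) * cos (2 * π * n * x)))
      volume 0 1 :=
    (intervalIntegrable_mul_cos intervalIntegrable_log_sin_pi_mul n).const_mul _
  have hsum : IntervalIntegrable (fun x => π * ∑ j ∈ Finset.range n,
      (cos (2 * π * j * x) + cos (2 * π * (j + 1 : ℕ) * x))) volume 0 1 :=
    Continuous.intervalIntegrable (by fun_prop) 0 1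
  have hftc := intervalIntegral.integral_eq_sub_of_hasDerivAt_of_le zero_le_one hcont.continuousOn
    (fun x hx => hasDerivAt_sin_two_pi_mul_mul_log_sin hx n) (hlog.add hsum)
  rw [intervalIntegral.integral_add hlog hsum, intervalIntegral.integral_const_mul,
    intervalIntegral.integral_const_mul, integral_sum_cos_add_cos hn] at hftc
  simp only [mul_one, sin_pi, log_zero, mul_zero, sin_zero, sub_zero] at hftc
  have hn' : (n : ℝ) ≠ 0 := Nat.cast_ne_zero.2 hn
  rw [cosCoeff, eq_div_iff (mul_ne_zero two_ne_zero hn')]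
  refine mul_left_cancel₀ pi_ne_zero ?_
  linear_combination hftc

lemma cosCoeff_log_Gamma {n : ℕ} (hn : n ≠ 0) :
    cosCoeff (fun x => log (Gamma x)) n = 1 / (4 * n) := by
  have hflip : IntervalIntegrable (fun x => log (Gamma (1 - x))) volume 0 1 := by
    simpa using (intervalIntegrable_log_Gamma.comp_sub_left 1).symm
  have hrefl : cosCoeff (fun x => log (Gamma x) + log (Gamma (1 - x)) + log (sin (π * x))) n =
      cosCoeff (fun _ => log π) n := by
    refine intervalIntegral.integral_congr_Ioo_of_le zero_le_one fun x hx => ?_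
    have h := congrArg log (Gamma_mul_Gamma_one_sub x)
    rw [log_mul (Gamma_pos_of_pos hx.1).ne' (Gamma_pos_of_pos (sub_pos.2 hx.2)).ne',
      log_div pi_ne_zero (sin_pi_mul_pos hx).ne'] at h
    dsimp only
    rw [h, sub_add_cancel]
  rw [cosCoeff_add (intervalIntegrable_log_Gamma.add hflip) intervalIntegrable_log_sin_pi_mul,
    cosCoeff_add intervalIntegrable_log_Gamma hflip,
    cosCoeff_comp_one_sub (fun x => log (Gamma x)), cosCoeff_log_sin_pi_mul hn, cosCoeff_const,
    if_neg (Int.natCast_ne_zero.2 hn)] at hrefl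
  have hn' : (n : ℝ) ≠ 0 := Nat.cast_ne_zero.2 hn
  field_simp at hrefl ⊢
  linarith

lemma hasSum_one_div_sq_sub_one : HasSum (fun n : ℕ => 1 / (((n : ℝ) + 2) ^ 2 - 1)) (3 / 4) := by
  have hpartial (N : ℕ) : ∑ n ∈ Finset.range N, 1 / (((n : ℝ) + 2) ^ 2 - 1) =
      3 / 4 - (1 / ((N : ℝ) + 1) + 1 / ((N + 1 : ℕ) + 1 : ℝ)) / 2 := by
    induction N with
    | zero => norm_num
    | succ N ih =>
      rw [Finset.sum_range_succ, ih, show ((N : ℝ) + 2) ^ 2 - 1 = (N + 1) * (N + 3) by ring]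
      push_cast
      field_simp
      ring
  have hnonneg (n : ℕ) : 0 ≤ 1 / (((n : ℝ) + 2) ^ 2 - 1) :=
    one_div_nonneg.2 (by nlinarith [n.cast_nonneg (α := ℝ)])
  rw [hasSum_iff_tendsto_nat_of_nonneg hnonneg]
  simp only [hpartial]
  have hlim := tendsto_one_div_add_atTop_nhds_zero_nat (𝕜 := ℝ)
  simpa using ((hlim.add (hlim.comp (tendsto_add_atTop_nat 1))).div_const 2).const_sub (3 / 4)

-- For `n = ±1` one of the two fractions is `1 / 0 = 0`, matching `sinCoeff f 0 = 0`.
lemma sinCoeff_sub_half_mul_cos (n : ℤ) :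
    sinCoeff (fun x => (x - 1 / 2) * cos (2 * π * x)) n =
      -(1 / (n + 1) + 1 / (n - 1)) / (4 * π) := by
  have hcoeff (m : ℤ) : sinCoeff (fun x => x - 1 / 2) m = -1 / (2 * π * m) := by
    simpa only [one_mul, ← sub_eq_add_neg] using sinCoeff_affine 1 (-(1 / 2)) m
  have hmod := sinCoeff_mul_cos (f := fun x => x - 1 / 2)
    (Continuous.intervalIntegrable (by fun_prop) 0 1) 1 n
  simp only [Int.cast_one, mul_one, hcoeff, div_mul_eq_div_div] at hmod
  rw [hmod]
  push_cast
  ring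

lemma hasSum_integral_log_Gamma_mul_sub_half_mul_cos :
    HasSum (fun n : ℕ => -(log (2 * π) + eulerMascheroniConstant + log (n + 1)) / (4 * π ^ 2) *
        ((1 / (n + 2) + 1 / n) / (n + 1)))
      (∫ x in (0 : ℝ)..1, log (Gamma x) * ((x - 1 / 2) * cos (2 * π * x))) := by
  have hmem : MemLp (fun x : ℝ => (x - 1 / 2) * cos (2 * π * x)) 2
      (volume.restrict (Ioc 0 1)) := by
    refine MemLp.of_bound (by fun_prop) 1 ?_
    filter_upwards [ae_restrict_mem measurableSet_Ioc] with x hx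
    rw [norm_mul, norm_eq_abs, norm_eq_abs]
    exact mul_le_one₀ (abs_le.2 ⟨by linarith [hx.1], by linarith [hx.2]⟩) (abs_nonneg _)
      (abs_cos_le_one _)
  have hodd (x : ℝ) : (1 - x - 1 / 2) * cos (2 * π * (1 - x)) =
      -((x - 1 / 2) * cos (2 * π * x)) := by
    rw [mul_one_sub, cos_two_pi_sub]
    ring
  convert! hasSum_sinCoeff_mul_sinCoeff_of_odd (memLp_log_Gamma ENNReal.ofNat_ne_top) hmem hodd
    using 2 with n
  have hcoeff := sinCoeff_log_Gamma n.succ_ne_zero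
  rw [Nat.cast_succ, Nat.cast_succ] at hcoeff
  rw [hcoeff, sinCoeff_sub_half_mul_cos, Int.cast_add, Int.cast_natCast, Int.cast_one,
    add_sub_cancel_right, add_assoc (n : ℝ), one_add_one_eq_two]
  field_simp

lemma hasSum_log_div_sq_sub_one :
    HasSum (fun n : ℕ => log (n + 2) / (((n : ℝ) + 2) ^ 2 - 1))
      (-(2 * π ^ 2) * (∫ x in (0 : ℝ)..1, log (Gamma x) * ((x - 1 / 2) * cos (2 * π * x))) -
        (log (2 * π) + eulerMascheroniConstant)) := by
  have hsum := (hasSum_nat_add_iff' 1).2 hasSum_integral_log_Gamma_mul_sub_half_mul_cos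
  rw [Finset.sum_range_one] at hsum
  convert! (hsum.mul_left (-(2 * π ^ 2))).sub
    (hasSum_one_div_sq_sub_one.mul_left (log (2 * π) + eulerMascheroniConstant)) using 1
  · ext n
    push_cast
    rw [show ((n : ℝ) + 2) ^ 2 - 1 = (n + 1) * (n + 3) by ring, add_assoc (n : ℝ),
      add_assoc (n : ℝ), one_add_one_eq_two, show (1 : ℝ) + 2 = 3 by norm_num]
    field_simp
    ring
  · simp only [Nat.cast_zero, zero_add, log_one, add_zero, div_zero, div_one]
    generalize ∫ x in (0 : ℝ)..1, log (Gamma x) * ((x - 1 / 2) * cos (2 * π * x)) = I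
    field_simp
    ring

/-- `∫₀¹ x·log Γ(x)·cos(2πx) dx = 1/8 − C/(2π²) − (1/(2π²))·∑_{n=2}^∞ (log n)/(n² − 1)`,
where `C = log(2π) + γ`. -/
theorem integral_x_log_Gamma_cos :
    ∫ x in (0:ℝ)..1, x * Real.log (Real.Gamma x) * Real.cos (2 * π * x) =
      1 / 8 - (Real.log (2 * π) + Real.eulerMascheroniConstant) / (2 * π ^ 2)
        - (1 / (2 * π ^ 2)) * ∑' n : ℕ, Real.log (n + 2) / (((n : ℝ) + 2) ^ 2 - 1) := by
  set I := ∫ x in (0 : ℝ)..1, log (Gamma x) * ((x - 1 / 2) * cos (2 * π * x)) with hI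
  have hcos : ∫ x in (0 : ℝ)..1, log (Gamma x) * cos (2 * π * x) = 1 / 4 := by
    simpa [cosCoeff] using cosCoeff_log_Gamma one_ne_zero
  have hsplit : ∫ x in (0 : ℝ)..1, x * log (Gamma x) * cos (2 * π * x) = I + 1 / 2 * (1 / 4) := by
    rw [hI, ← hcos, ← intervalIntegral.integral_const_mul, ← intervalIntegral.integral_add
      (intervalIntegrable_log_Gamma.mul_continuousOn (by fun_prop))
      ((intervalIntegrable_log_Gamma.mul_continuousOn (by fun_prop)).const_mul _)]
    congr 1 with x
    ring
  rw [hsplit, hasSum_log_div_sq_sub_one.tsum_eq, ← hI]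
  field_simp
  ring
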